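/- For every integer n ≥ 0 and every complex number x, the Pfaffian of the 2n×2n skew-symmetric matrix whose (i,j) entry is (j−i)·N_{i+j−2}(x) for 1 ≤ i,j ≤ 2n equals x^{n²}·∏_{k=0}^{n−1} (4k+1). -/

import Mathlib

/-- The Pfaffian of a `2N × 2N` matrix, defined as the sum over all partitions of
the index set into two-element blocks (encoded as permutations `σ` with
`σ(2i) < σ(2i+1)` and `σ(0) < σ(2) < … < σ(2N-2)`, one for each partition) of the
sign of `σ` times the product `∏ i, A (σ (2i)) (σ (2i+1))`. -/
def pfaffian {R : Type*} [CommRing R] {N : ℕ}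
    (A : Matrix (Fin (2 * N)) (Fin (2 * N)) R) : R :=
  ∑ σ ∈ Finset.univ.filter (fun σ : Equiv.Perm (Fin (2 * N)) =>
      (∀ i : Fin N, σ ⟨2 * i.val, by have := i.isLt; omega⟩
          < σ ⟨2 * i.val + 1, by have := i.isLt; omega⟩) ∧
      (∀ i j : Fin N, i < j → σ ⟨2 * i.val, by have := i.isLt; omega⟩
          < σ ⟨2 * j.val, by have := j.isLt; omega⟩)),
    (Equiv.Perm.sign σ : ℤ) •
      ∏ i : Fin N, A (σ ⟨2 * i.val, by have := i.isLt; omega⟩)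
        (σ ⟨2 * i.val + 1, by have := i.isLt; omega⟩)

/-- The `n`-th Narayana polynomial, `N_0(x) = 1` and
`N_n(x) = ∑_{k=0}^{n} (1/n)·C(n,k)·C(n,k-1)·x^k` for `n ≥ 1`
(the binomial coefficient `C(n,k-1)` being `0` for `k = 0`). -/
noncomputable def narayana (n : ℕ) (x : ℂ) : ℂ :=
  if n = 0 then 1
  else ∑ k ∈ Finset.range (n + 1),
    (1 / (n : ℂ)) * (n.choose k) * (if k = 0 then 0 else (n.choose (k - 1) : ℂ)) * x ^ k

/-!
For `n ≥ 0`, `N_{n+1}(x)` is the `n`-th moment `L(X^n)` of the functional `L` sending `f` to the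
constant term of `z (x / z - z) f((1 + z) (1 + x / z))`. Hence the matrix `(j - i) N_{i+j}(x)` is
the Gram matrix, in the basis of monomials, of the alternating form `(f, g) ↦ L(f g' - f' g)`.
Since `Pf (B A Bᵀ) = det B * Pf A`, the monomials may be replaced by any monic polynomials of the
same degrees. The shifted Dickson polynomials, which send `(1 + z) (1 + x / z)` to
`z^n + (x / z)^n`, cancel the factor `x / z - z` against the chain rule, and the form becomes
tridiagonal with superdiagonal entries `(2i + 1) x^{i+1}`. The Pfaffian of such a matrix is the
product of the entries in the positions `(2k, 2k + 1)`, namely of `(4k + 1) x^{2k+1}`.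
-/

open Equiv Finset

section Pfaffian

variable {R : Type*} [CommRing R] {N : ℕ}

/-- The partition of `Fin (2 * N)` into the blocks `{2i, 2i + 1}`: the pair `(i, b)` stands for the
index `2i + b`. -/
def blockEquiv (N : ℕ) : Fin N × Fin 2 ≃ Fin (2 * N) :=
  finProdFinEquiv.trans (finCongr (Nat.mul_comm N 2))

lemma val_blockEquiv (p : Fin N × Fin 2) : (blockEquiv N p : ℕ) = p.2 + 2 * p.1 := rfl

/-- The permutations `σ` over which `pfaffian` sums: the blocks `{σ (2i), σ (2i + 1)}` form a
perfect matching, listed with increasing entries in each block and increasing first entries. -/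
def IsOrderedMatching (σ : Perm (Fin (2 * N))) : Prop :=
  (∀ i, σ (blockEquiv N (i, 0)) < σ (blockEquiv N (i, 1))) ∧
    StrictMono fun i ↦ σ (blockEquiv N (i, 0))

/-- The summand of `pfaffian A` at an arbitrary permutation `σ`, ordered or not. -/
def pfaffianTerm (A : Matrix (Fin (2 * N)) (Fin (2 * N)) R) (σ : Perm (Fin (2 * N))) : R :=
  Perm.sign σ • ∏ i, A (σ (blockEquiv N (i, 0))) (σ (blockEquiv N (i, 1)))

open scoped Classical in
lemma pfaffian_eq_sum_pfaffianTerm (A : Matrix (Fin (2 * N)) (Fin (2 * N)) R) :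
    pfaffian A = ∑ σ with IsOrderedMatching σ, pfaffianTerm A σ := by
  have val_zero (i : Fin N) : (⟨2 * i, by lia⟩ : Fin (2 * N)) = blockEquiv N (i, 0) :=
    Fin.ext (by simp [val_blockEquiv])
  have val_one (i : Fin N) : (⟨2 * i + 1, by lia⟩ : Fin (2 * N)) = blockEquiv N (i, 1) :=
    Fin.ext (by simp [val_blockEquiv, add_comm])
  simp only [pfaffian, pfaffianTerm, val_zero, val_one, Units.smul_def]
  exact sum_congr (filter_congr fun _ _ ↦ Iff.rfl) fun _ _ ↦ rfl

lemma map_pfaffian {S : Type*} [CommRing S] (f : R →+* S)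
    (A : Matrix (Fin (2 * N)) (Fin (2 * N)) R) : f (pfaffian A) = pfaffian (A.map f) := by
  simp [pfaffian, zsmul_eq_mul]

/-- The hyperoctahedral permutation that moves block `i` to block `π i` and there acts by
`ε (π i)`. -/
def blockPerm (π : Perm (Fin N)) (ε : Fin N → Perm (Fin 2)) : Perm (Fin (2 * N)) :=
  (blockEquiv N).permCongr (prodCongrRight ε * prodCongrLeft fun _ ↦ π)

lemma blockPerm_apply (π : Perm (Fin N)) (ε : Fin N → Perm (Fin 2)) (i : Fin N) (b : Fin 2) :
    blockPerm π ε (blockEquiv N (i, b)) = blockEquiv N (π i, ε (π i) b) := by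
  simp [blockPerm]

lemma sign_blockPerm (π : Perm (Fin N)) (ε : Fin N → Perm (Fin 2)) :
    Perm.sign (blockPerm π ε) = ∏ i, Perm.sign (ε i) := by
  simp [blockPerm, Perm.sign_prodCongrRight, Perm.sign_prodCongrLeft]

lemma pfaffianTerm_mul_blockPerm {A : Matrix (Fin (2 * N)) (Fin (2 * N)) R}
    (hA : A.transpose = -A) (σ : Perm (Fin (2 * N))) (π : Perm (Fin N))
    (ε : Fin N → Perm (Fin 2)) :
    pfaffianTerm A (σ * blockPerm π ε) = pfaffianTerm A σ := by
  have flip (k : Fin N) :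
      A (σ (blockEquiv N (k, ε k 0))) (σ (blockEquiv N (k, ε k 1))) =
        Perm.sign (ε k) • A (σ (blockEquiv N (k, 0))) (σ (blockEquiv N (k, 1))) := by
    have perm_two : ∀ τ : Perm (Fin 2), τ = 1 ∨ τ = swap 0 1 := by decide
    rcases perm_two (ε k) with h | h <;> simp [h, ← Matrix.neg_apply, ← hA]
  simp only [pfaffianTerm, Perm.mul_apply, blockPerm_apply, flip]
  rw [Equiv.prod_comp π fun k ↦
      Perm.sign (ε k) • A (σ (blockEquiv N (k, 0))) (σ (blockEquiv N (k, 1))),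
    prod_smul, smul_smul, Perm.sign_mul, sign_blockPerm, mul_assoc, Int.units_mul_self, mul_one]

lemma existsUnique_strictMono_comp {α : Type*} [LinearOrder α] {n : ℕ} {f : Fin n → α}
    (hf : Function.Injective f) : ∃! π : Perm (Fin n), StrictMono (f ∘ π) := by
  refine ⟨Tuple.sort f,
    (Tuple.monotone_sort f).strictMono_of_injective (hf.comp (Tuple.sort f).injective),
    fun π hπ ↦ Equiv.ext fun i ↦ hf ?_⟩
  exact congrFun (Tuple.comp_sort_eq_comp_iff_monotone.2 hπ.monotone) i

lemma existsUnique_isOrderedMatching_mul_blockPerm (σ : Perm (Fin (2 * N))) :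
    ∃! p : Perm (Fin N) × (Fin N → Perm (Fin 2)), IsOrderedMatching (σ * blockPerm p.1 p.2) := by
  have inj : Function.Injective fun p ↦ σ (blockEquiv N p) :=
    σ.injective.comp (blockEquiv N).injective
  choose ε hε ε_unique using fun k ↦ existsUnique_strictMono_comp
    (f := fun b ↦ σ (blockEquiv N (k, b))) (inj.comp (Prod.mk_right_injective k))
  obtain ⟨π, hπ, π_unique⟩ := existsUnique_strictMono_comp
    (f := fun k ↦ σ (blockEquiv N (k, ε k 0))) fun k l h ↦ congrArg Prod.fst (inj h)
  simp only [Fin.strictMono_iff_lt_succ, Fin.forall_fin_one] at hε ε_unique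
  refine ⟨(π, ε), ⟨fun i ↦ ?_, fun i j hij ↦ ?_⟩, ?_⟩
  · simpa [blockPerm_apply] using hε (π i)
  · simpa [blockPerm_apply] using hπ hij
  · rintro ⟨π', ε'⟩ ⟨h_block, h_first⟩
    simp only [Perm.mul_apply, blockPerm_apply] at h_block h_first
    obtain rfl : ε' = ε := funext fun k ↦ ε_unique k _ (by simpa using h_block (π'.symm k))
    rw [π_unique π' h_first]

lemma sum_pfaffianTerm {A : Matrix (Fin (2 * N)) (Fin (2 * N)) R} (hA : A.transpose = -A) :
    ∑ σ, pfaffianTerm A σ = (N.factorial * 2 ^ N) • pfaffian A := by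
  classical
  have translate (p : Perm (Fin N) × (Fin N → Perm (Fin 2))) :
      pfaffian A =
        ∑ σ, if IsOrderedMatching (σ * blockPerm p.1 p.2) then pfaffianTerm A σ else 0 := by
    rw [pfaffian_eq_sum_pfaffianTerm, sum_filter,
      ← Equiv.sum_comp (Equiv.mulRight (blockPerm p.1 p.2))]
    simp only [Equiv.coe_mulRight, pfaffianTerm_mul_blockPerm hA]
  have card : Fintype.card (Perm (Fin N) × (Fin N → Perm (Fin 2))) = N.factorial * 2 ^ N := by
    simp [Fintype.card_perm]
  rw [← card, ← card_univ, ← sum_const, sum_congr rfl fun p _ ↦ translate p, sum_comm]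
  refine sum_congr rfl fun σ _ ↦ ?_
  obtain ⟨p, hp, p_unique⟩ := existsUnique_isOrderedMatching_mul_blockPerm σ
  rw [Fintype.sum_eq_single p fun q hq ↦ if_neg (mt (p_unique q) hq), if_pos hp]

lemma prod_blockEquiv {M : Type*} [CommMonoid M] (f : Fin (2 * N) → M) :
    ∏ j, f j = ∏ i, ∏ b, f (blockEquiv N (i, b)) := by
  rw [← Equiv.prod_comp (blockEquiv N), Fintype.prod_prod_type]

lemma pfaffianTerm_mul_mul_transpose (A B : Matrix (Fin (2 * N)) (Fin (2 * N)) R)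
    (σ : Perm (Fin (2 * N))) :
    pfaffianTerm (B * A * B.transpose) σ = ∑ f : Fin (2 * N) → Fin (2 * N),
      (Perm.sign σ • ∏ j, B (σ j) (f j)) *
        ∏ i, A (f (blockEquiv N (i, 0))) (f (blockEquiv N (i, 1))) := by
  have entry (s : Fin 2 → Fin (2 * N)) :
      (B * A * B.transpose) (s 0) (s 1) =
        ∑ t : Fin 2 → Fin (2 * N), (∏ b, B (s b) (t b)) * A (t 0) (t 1) := by
    rw [← Equiv.sum_comp (finTwoArrowEquiv _).symm, Fintype.sum_prod_type_right]
    simp only [Matrix.mul_apply, Matrix.transpose_apply, sum_mul, Fin.prod_univ_two,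
      finTwoArrowEquiv_symm_apply, Matrix.cons_val_zero, Matrix.cons_val_one, mul_right_comm]
  let splitBlocks : (Fin (2 * N) → Fin (2 * N)) ≃ (Fin N → Fin 2 → Fin (2 * N)) :=
    ((blockEquiv N).symm.arrowCongr (Equiv.refl _)).trans (Equiv.curry _ _ _)
  have splitBlocks_apply (f : Fin (2 * N) → Fin (2 * N)) (i : Fin N) (b : Fin 2) :
      splitBlocks f i b = f (blockEquiv N (i, b)) := rfl
  have entries (i : Fin N) := entry fun b ↦ σ (blockEquiv N (i, b))
  simp only [pfaffianTerm, entries, prod_univ_sum, Fintype.piFinset_univ, smul_sum]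
  rw [← Equiv.sum_comp splitBlocks]
  simp only [splitBlocks_apply, prod_mul_distrib, smul_mul_assoc, prod_blockEquiv]

lemma sum_pfaffianTerm_mul_mul_transpose (A B : Matrix (Fin (2 * N)) (Fin (2 * N)) R) :
    ∑ σ, pfaffianTerm (B * A * B.transpose) σ = B.det * ∑ σ, pfaffianTerm A σ := by
  simp only [pfaffianTerm_mul_mul_transpose]
  rw [sum_comm]
  simp only [← sum_mul]
  have det_columns (f : Fin (2 * N) → Fin (2 * N)) :
      ∑ σ : Perm (Fin (2 * N)), Perm.sign σ • ∏ j, B (σ j) (f j) = (B.submatrix id f).det := by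
    simp only [Matrix.det_apply, Matrix.submatrix_apply, id]
  have det_repeated {f : Fin (2 * N) → Fin (2 * N)} (hf : ¬ Function.Injective f) :
      (B.submatrix id f).det = 0 := by
    obtain ⟨i, j, h, hij⟩ := Function.not_injective_iff.1 hf
    exact Matrix.det_zero_of_column_eq hij fun k ↦ by simp [h]
  simp only [det_columns, mul_sum]
  refine (Fintype.sum_of_injective (fun τ : Perm (Fin (2 * N)) ↦ ⇑τ) DFunLike.coe_injective _ _
    (fun f hf ↦ ?_) fun τ ↦ ?_).symm
  · rw [det_repeated fun h ↦ hf ⟨Equiv.ofBijective f (Finite.injective_iff_bijective.1 h), rfl⟩,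
      zero_mul]
  · rw [Matrix.det_permute', pfaffianTerm, Units.smul_def, zsmul_eq_mul]
    ring

lemma pfaffian_mul_mul_transpose_of_isAddTorsionFree [IsAddTorsionFree R]
    {A : Matrix (Fin (2 * N)) (Fin (2 * N)) R} (hA : A.transpose = -A)
    (B : Matrix (Fin (2 * N)) (Fin (2 * N)) R) :
    pfaffian (B * A * B.transpose) = B.det * pfaffian A := by
  have hBA : (B * A * B.transpose).transpose = -(B * A * B.transpose) := by
    simp [Matrix.transpose_mul, hA, Matrix.mul_assoc]
  have h := sum_pfaffianTerm_mul_mul_transpose A B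
  rw [sum_pfaffianTerm hA, sum_pfaffianTerm hBA, mul_smul_comm] at h
  exact nsmul_right_injective (by positivity) h

/-- Both sides are integer polynomials in the entries of `B` and in the entries of `A` above the
diagonal, so it suffices to treat matrices of indeterminates over `ℤ`, where the factor `2 ^ N * N!`
cancels. -/
theorem pfaffian_mul_mul_transpose {A : Matrix (Fin (2 * N)) (Fin (2 * N)) R}
    (hA : A.transpose = -A) (hA₀ : ∀ i, A i i = 0) (B : Matrix (Fin (2 * N)) (Fin (2 * N)) R) :
    pfaffian (B * A * B.transpose) = B.det * pfaffian A := by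
  let m := Fin (2 * N)
  let U : Matrix m m (MvPolynomial (m × m ⊕ m × m) ℤ) := .of fun i j ↦ .X (.inl (i, j))
  let V : Matrix m m (MvPolynomial (m × m ⊕ m × m) ℤ) := .of fun i j ↦ .X (.inr (i, j))
  let φ : MvPolynomial (m × m ⊕ m × m) ℤ →+* R := MvPolynomial.eval₂Hom (Int.castRingHom R)
    (Sum.elim (fun p ↦ if p.1 < p.2 then A p.1 p.2 else 0) fun p ↦ B p.1 p.2)
  have map_U : (U - U.transpose).map φ = A := by
    ext i j
    rcases lt_trichotomy i j with h | rfl | h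
    · simp [U, φ, h, h.not_gt]
    · simp [hA₀]
    · simpa [U, φ, h, h.not_gt] using (congrFun₂ hA j i).symm
  have map_V : V.map φ = B := by ext i j; simp [V, φ]
  have generic := congrArg φ (pfaffian_mul_mul_transpose_of_isAddTorsionFree
    (A := U - U.transpose) (by simp) V)
  simpa only [map_mul, map_pfaffian, RingHom.map_det, RingHom.mapMatrix_apply, Matrix.map_mul,
    Matrix.transpose_map, map_U, map_V] using generic

lemma IsOrderedMatching.eq_one_of_adjacent {σ : Perm (Fin (2 * N))} (hσ : IsOrderedMatching σ)
    (adjacent : ∀ i, (σ (blockEquiv N (i, 0)) : ℕ) + 1 = σ (blockEquiv N (i, 1))) : σ = 1 := by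
  suffices StrictMono σ from (Equiv.Perm.monotone_iff σ).1 this.monotone
  intro k l hkl
  obtain ⟨⟨i, a⟩, rfl⟩ := (blockEquiv N).surjective k
  obtain ⟨⟨j, b⟩, rfl⟩ := (blockEquiv N).surjective l
  rw [Fin.lt_def, val_blockEquiv, val_blockEquiv] at hkl
  obtain rfl | hij : i = j ∨ i < j := by rw [Fin.lt_def, Fin.ext_iff]; lia
  · obtain ⟨rfl, rfl⟩ : a = 0 ∧ b = 1 := by lia
    exact hσ.1 i
  · have first_lt : σ (blockEquiv N (i, 0)) < σ (blockEquiv N (j, 0)) := hσ.2 hij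
    have ne : σ (blockEquiv N (i, 1)) ≠ σ (blockEquiv N (j, 0)) := by simp
    have hi := adjacent i
    have hj := adjacent j
    fin_cases a <;> fin_cases b <;> simp only [Fin.zero_eta, Fin.mk_one] <;> lia

lemma isOrderedMatching_one : IsOrderedMatching (1 : Perm (Fin (2 * N))) := by
  refine ⟨fun i ↦ ?_, fun i j hij ↦ ?_⟩ <;>
    rw [Fin.lt_def] at * <;> simp only [Perm.one_apply, val_blockEquiv] <;> lia

theorem pfaffian_eq_prod_of_superdiagonal {A : Matrix (Fin (2 * N)) (Fin (2 * N)) R}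
    (hA : ∀ i j : Fin (2 * N), i < j → (i : ℕ) + 1 ≠ j → A i j = 0) :
    pfaffian A = ∏ i, A (blockEquiv N (i, 0)) (blockEquiv N (i, 1)) := by
  classical
  rw [pfaffian_eq_sum_pfaffianTerm, sum_eq_single_of_mem 1 (by simp [isOrderedMatching_one])]
  · simp [pfaffianTerm]
  · intro σ hσ hne
    have hσ : IsOrderedMatching σ := by simpa using hσ
    obtain ⟨i, hi⟩ := not_forall.1 (mt hσ.eq_one_of_adjacent hne)
    rw [pfaffianTerm, prod_eq_zero (mem_univ i) (hA _ _ (hσ.1 i) hi), smul_zero]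

end Pfaffian

open Polynomial
open LaurentPolynomial (T T_add T_apply T_pow)
open scoped LaurentPolynomial

section GramMatrix

variable {R : Type*} [CommRing R] {N : ℕ}

theorem pfaffian_gram_eq_of_isMonicOfDegree {β : LinearMap.BilinForm R R[X]} (hβ : β.IsAlt)
    {p : Fin (2 * N) → R[X]} (hp : ∀ i, IsMonicOfDegree (p i) i) :
    pfaffian (Matrix.of fun i j : Fin (2 * N) ↦ β (X ^ (i : ℕ)) (X ^ (j : ℕ))) =
      pfaffian (Matrix.of fun i j ↦ β (p i) (p j)) := by
  let G : Matrix (Fin (2 * N)) (Fin (2 * N)) R := .of fun i j ↦ β (X ^ (i : ℕ)) (X ^ (j : ℕ))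
  let B : Matrix (Fin (2 * N)) (Fin (2 * N)) R := .of fun i j ↦ (p i).coeff j
  have det_B : B.det = 1 := by
    rw [← Matrix.det_transpose]
    exact Matrix.det_matrixOfPolynomials p (fun i ↦ (hp i).natDegree_eq) fun i ↦ (hp i).monic
  have expand (i : Fin (2 * N)) : p i = ∑ j, B i j • X ^ (j : ℕ) := by
    conv_lhs => rw [(p i).as_sum_range' (2 * N) (by simp [(hp i).natDegree_eq]), sum_range]
    simp only [B, Matrix.of_apply, ← smul_X_eq_monomial]
  have congruence : Matrix.of (fun i j ↦ β (p i) (p j)) = B * G * B.transpose := by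
    ext i j
    rw [Matrix.of_apply, expand i, expand j]
    simp only [map_sum, map_smul, LinearMap.sum_apply, LinearMap.smul_apply, smul_eq_mul,
      Matrix.mul_apply, Matrix.transpose_apply, G, Matrix.of_apply, mul_comm (B j _)]
  have transpose_G : G.transpose = -G := by
    ext i j
    exact (hβ.neg_eq _ _).symm
  rw [congruence, pfaffian_mul_mul_transpose transpose_G (fun i ↦ hβ _), det_B, one_mul]

end GramMatrix

section Dickson

lemma natDegree_dickson_le {R : Type*} [CommRing R] (k : ℕ) (c : R) (n : ℕ) :
    (dickson k c n).natDegree ≤ n := by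
  induction n using Nat.twoStepInduction with
  | zero =>
    rw [dickson_zero]
    exact (natDegree_sub_le _ _).trans (by simp)
  | one => simp [natDegree_X_le]
  | more n ih ih' =>
    rw [dickson_add_two]
    have X_mul_le : (X * dickson k c (n + 1)).natDegree ≤ 1 + (n + 1) :=
      natDegree_mul_le_of_le natDegree_X_le ih'
    have C_mul_le : (C c * dickson k c n).natDegree ≤ n := (natDegree_C_mul_le _ _).trans ih
    exact (natDegree_sub_le _ _).trans (max_le (by lia) (by lia))

lemma isMonicOfDegree_dickson_succ {R : Type*} [CommRing R] [Nontrivial R] (k : ℕ) (c : R)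
    (n : ℕ) : IsMonicOfDegree (dickson k c (n + 1)) (n + 1) := by
  induction n with
  | zero => simpa using isMonicOfDegree_X R
  | succ n ih =>
    rw [dickson_add_two, add_comm (n + 1)]
    refine ((isMonicOfDegree_X R).mul ih).sub ?_
    exact (natDegree_C_mul_le _ _).trans_lt ((natDegree_dickson_le k c n).trans_lt (by lia))

variable {R S : Type*} [CommRing R] [CommRing S] [Algebra R S] {c : R} {a b : S}

lemma aeval_add_dickson (h : algebraMap R S c = a * b) (n : ℕ) :
    aeval (a + b) (dickson 1 c n) = a ^ n + b ^ n := by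
  induction n using Nat.twoStepInduction with
  | zero =>
    simp only [dickson_zero, Nat.cast_one, map_sub, map_ofNat, map_one, pow_zero]
    norm_num
  | one => simp
  | more n ih ih' =>
    simp only [dickson_add_two, map_sub, map_mul, aeval_X, aeval_C, ih, ih', h]
    ring

lemma aeval_add_derivative_dickson_mul_sub (h : algebraMap R S c = a * b) (n : ℕ) :
    aeval (a + b) (derivative (dickson 1 c n)) * (a - b) = n * (a ^ n - b ^ n) := by
  induction n using Nat.twoStepInduction with
  | zero => simp
  | one => simp
  | more n ih ih' =>
    simp only [dickson_add_two, derivative_mul, derivative_X, derivative_C,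
      map_sub, map_add, map_mul, aeval_X, aeval_C, aeval_add_dickson h, h, zero_mul, one_mul,
      zero_add]
    push_cast at ih' ⊢
    linear_combination (a + b) * ih' - a * b * ih

end Dickson

section LaurentPolynomial

variable {R : Type*} [CommRing R]

/-- The constant term of a Laurent polynomial, as a linear functional. -/
noncomputable def constantTerm : R[T;T⁻¹] →ₗ[R] R :=
  Finsupp.lapply 0 ∘ₗ (AddMonoidAlgebra.coeffLinearEquiv R).toLinearMap

lemma constantTerm_T (m : ℤ) : constantTerm (T m : R[T;T⁻¹]) = if m = 0 then 1 else 0 :=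
  T_apply 0 m

lemma constantTerm_T_mul_pow_mul_pow (x : R) (k : ℤ) (m n : ℕ) :
    constantTerm (T k * (T 1 ^ m * (x • T (-1)) ^ n)) = if k + m = n then x ^ n else 0 := by
  have : T k * (T 1 ^ m * (x • T (-1)) ^ n) = x ^ n • (T (k + m - n) : R[T;T⁻¹]) := by
    rw [_root_.smul_pow, T_pow, T_pow, mul_smul_comm, mul_smul_comm, ← T_add, ← T_add]
    congr 2
    ring
  rw [this, map_smul, constantTerm_T]
  simp [sub_eq_zero]

lemma constantTerm_T_mul_pow (x : R) (n m : ℕ) :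
    constantTerm (T m * ((1 + T 1) * (1 + x • T (-1))) ^ n) =
      ∑ k ∈ range (n + 1), n.choose k * n.choose (k + m) * x ^ (k + m) := by
  have expand : (T m : R[T;T⁻¹]) * ((1 + T 1) * (1 + x • T (-1))) ^ n =
      ∑ k ∈ range (n + 1), ∑ l ∈ range (n + 1),
        (n.choose k * n.choose l) • (T m * (T 1 ^ k * (x • T (-1)) ^ l)) := by
    rw [mul_pow, add_comm 1 (T 1), add_comm 1 (x • T (-1)), add_pow, add_pow, sum_mul_sum]
    simp only [mul_sum, one_pow, mul_one]
    refine sum_congr rfl fun k _ ↦ sum_congr rfl fun l _ ↦ ?_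
    rw [nsmul_eq_mul, Nat.cast_mul]
    ring
  rw [expand]
  simp only [map_sum, map_nsmul, constantTerm_T_mul_pow_mul_pow]
  refine sum_congr rfl fun k _ ↦ ?_
  norm_cast
  simp only [nsmul_eq_mul, Nat.cast_mul, mul_ite, mul_zero, sum_ite_eq, mem_range, add_comm m k]
  split_ifs with h
  · rfl
  · simp [Nat.choose_eq_zero_of_lt (show n < k + m by lia)]

end LaurentPolynomial

section Narayana

variable {R : Type*} [CommRing R]

/-- The Narayana number `N(n + 1, k + 1) = C(n + 1, k + 1) C(n + 1, k) / (n + 1)`; the division is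
exact. -/
def narayanaNumber (n k : ℕ) : ℕ :=
  (n + 1).choose (k + 1) * (n + 1).choose k / (n + 1)

/-- The value at `x` of the `n`-th Narayana polynomial, over an arbitrary commutative ring. -/
def narayanaEval (x : R) : ℕ → R
  | 0 => 1
  | n + 1 => ∑ k ∈ range (n + 1), narayanaNumber n k * x ^ (k + 1)

lemma choose_succ_mul_choose_succ (n k : ℕ) :
    ((n + 1).choose (k + 1) * (n + 1).choose k : ℤ) =
      (n + 1) * (n.choose k * n.choose k +
        n.choose (k + 1) * (n.choose k - (n + 1).choose k)) := by
  have absorb_low : ((n + 1) * n.choose k : ℤ) = (n + 1).choose k * (n + 1 - k) := by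
    obtain hk | hk := le_or_gt k (n + 1)
    · have h := n.choose_mul_succ_eq k
      zify [hk] at h
      linear_combination h
    · simp [Nat.choose_eq_zero_of_lt hk, Nat.choose_eq_zero_of_lt (show n < k by lia)]
  have absorb_high : ((n + 1) * n.choose k : ℤ) = (n + 1).choose (k + 1) * (k + 1) := by
    exact_mod_cast Nat.add_one_mul_choose_eq n k
  have pascal : ((n + 1).choose (k + 1) : ℤ) = n.choose k + n.choose (k + 1) := by
    exact_mod_cast Nat.choose_succ_succ n k
  linear_combination (n + 1) * (n.choose k - (n + 1).choose k) * pascal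
    - (n + 1).choose (k + 1) * absorb_low - (n + 1).choose k * absorb_high

lemma succ_dvd_choose_succ_mul_choose_succ (n k : ℕ) :
    n + 1 ∣ (n + 1).choose (k + 1) * (n + 1).choose k := by
  exact_mod_cast Dvd.intro _ (choose_succ_mul_choose_succ n k).symm

lemma cast_narayanaNumber (n k : ℕ) :
    (narayanaNumber n k : R) =
      n.choose k * n.choose k + n.choose (k + 1) * (n.choose k - (n + 1).choose k) := by
  have h : (narayanaNumber n k : ℤ) =
      n.choose k * n.choose k + n.choose (k + 1) * (n.choose k - (n + 1).choose k) := by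
    refine mul_left_cancel₀ (Nat.cast_add_one_ne_zero n) ?_
    rw [← choose_succ_mul_choose_succ]
    exact_mod_cast Nat.mul_div_cancel' (succ_dvd_choose_succ_mul_choose_succ n k)
  exact_mod_cast congrArg (Int.cast : ℤ → R) h

lemma narayana_eq_narayanaEval (n : ℕ) (x : ℂ) : narayana n x = narayanaEval x n := by
  cases n with
  | zero => simp [narayana, narayanaEval]
  | succ n =>
    rw [narayana, if_neg n.succ_ne_zero, sum_range_succ']
    simp only [if_true, mul_zero, zero_mul, add_zero, narayanaEval]
    refine sum_congr rfl fun k _ ↦ ?_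
    rw [narayanaNumber, Nat.cast_div (succ_dvd_choose_succ_mul_choose_succ n k)
      (Nat.cast_ne_zero.2 n.succ_ne_zero), if_neg k.succ_ne_zero, Nat.add_sub_cancel,
      Nat.cast_mul]
    ring

/-- The Laurent polynomial `(1 + z) (1 + x / z)`, the constant terms of whose powers generate the
Narayana polynomials. -/
noncomputable def narayanaSymbol (x : R) : R[T;T⁻¹] :=
  (1 + T 1) * (1 + x • T (-1))

/-- The linear functional with moments `X ^ n ↦ N_{n + 1}(x)`. -/
noncomputable def narayanaFunctional (x : R) : R[X] →ₗ[R] R :=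
  constantTerm ∘ₗ LinearMap.mulLeft R (T 1 * (x • T (-1) - T 1)) ∘ₗ
    (aeval (narayanaSymbol x)).toLinearMap

lemma narayanaFunctional_apply (x : R) (f : R[X]) :
    narayanaFunctional x f =
      constantTerm (T 1 * (x • T (-1) - T 1) * aeval (narayanaSymbol x) f) := rfl

lemma narayanaFunctional_X_pow (x : R) (n : ℕ) :
    narayanaFunctional x (X ^ n) = narayanaEval x (n + 1) := by
  have weight : (T 1 * (x • T (-1) - T 1) : R[T;T⁻¹]) = x • T (0 : ℕ) - T (2 : ℕ) := by
    rw [mul_sub, mul_smul_comm, ← T_add, ← T_add]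
    rfl
  rw [narayanaFunctional_apply, map_pow, aeval_X, weight, narayanaSymbol, sub_mul,
    smul_mul_assoc, map_sub, map_smul, constantTerm_T_mul_pow, constantTerm_T_mul_pow,
    narayanaEval]
  simp only [cast_narayanaNumber, add_mul, sum_add_distrib, smul_eq_mul, mul_sum]
  rw [sub_eq_add_neg]
  congr 1
  · exact sum_congr rfl fun k _ ↦ by ring_nf
  · rw [sum_range_succ, sum_range_succ' _ n, Nat.choose_eq_zero_of_lt (show n < n + 2 by lia)]
    simp only [Nat.choose_succ_succ n, Nat.choose_zero_right, Nat.cast_zero, Nat.cast_one,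
      Nat.cast_add, mul_zero, zero_mul, sub_self, add_zero, ← sum_neg_distrib]
    exact sum_congr rfl fun k _ ↦ by ring

/-- The alternating form `(f, g) ↦ L (f g' - f' g)`, with `L = narayanaFunctional x`. Its Gram
matrix in the basis of monomials has the entries `(j - i) N_{i + j}(x)`. -/
noncomputable def narayanaForm (x : R) : LinearMap.BilinForm R R[X] :=
  (wronskianBilin R).compr₂ (narayanaFunctional x)

lemma narayanaForm_apply (x : R) (f g : R[X]) :
    narayanaForm x f g =
      constantTerm (T 1 * (x • T (-1) - T 1) * aeval (narayanaSymbol x) (wronskian f g)) := rfl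

lemma isAlt_narayanaForm (x : R) : (narayanaForm x).IsAlt := fun f ↦ by
  simp [narayanaForm, wronskianBilin_apply, wronskian_self_eq_zero]

lemma wronskian_X_pow (i j : ℕ) :
    wronskian (X ^ i) (X ^ j : R[X]) = (j - i : R) • X ^ (i + j - 1) := by
  rw [wronskian, derivative_X_pow, derivative_X_pow, smul_eq_C_mul, C_sub, map_natCast,
    map_natCast]
  cases i with
  | zero => simp
  | succ i =>
    cases j with
    | zero =>
      simp only [Nat.cast_zero, zero_mul, mul_zero, pow_zero, mul_one, add_zero]
      ring
    | succ j =>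
      rw [Nat.add_sub_cancel, Nat.add_sub_cancel, show i + 1 + (j + 1) - 1 = i + j + 1 by lia]
      ring

lemma narayanaForm_X_pow_X_pow (x : R) (i j : ℕ) :
    narayanaForm x (X ^ i) (X ^ j) = (j - i) * narayanaEval x (i + j) := by
  rw [narayanaForm, LinearMap.compr₂_apply, wronskianBilin_apply, wronskian_X_pow, map_smul,
    narayanaFunctional_X_pow, smul_eq_mul]
  obtain h | h := Nat.eq_zero_or_pos (i + j)
  · obtain ⟨rfl, rfl⟩ := Nat.add_eq_zero_iff.1 h
    simp
  · rw [Nat.sub_add_cancel h]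

/-- The monic polynomials that make `narayanaForm x` tridiagonal: for `n ≥ 1`, the polynomial of
index `n` sends `narayanaSymbol x` to `z ^ n + (x / z) ^ n`. -/
noncomputable def shiftedDickson (x : R) : ℕ → R[X]
  | 0 => 1
  | n + 1 => (dickson 1 x (n + 1)).comp (X - C (1 + x))

lemma isMonicOfDegree_shiftedDickson [Nontrivial R] (x : R) (n : ℕ) :
    IsMonicOfDegree (shiftedDickson x n) n := by
  cases n with
  | zero => exact isMonicOfDegree_zero_iff.2 rfl
  | succ n =>
    simpa only [shiftedDickson, mul_one] using
      (isMonicOfDegree_dickson_succ 1 x n).comp one_ne_zero (isMonicOfDegree_X_sub_one (1 + x))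

lemma algebraMap_eq_T_mul_smul_T (x : R) :
    algebraMap R R[T;T⁻¹] x = T 1 * (x • T (-1)) := by
  rw [mul_smul_comm, ← T_add, Algebra.algebraMap_eq_smul_one]
  rfl

lemma aeval_narayanaSymbol_X_sub_C (x : R) :
    aeval (narayanaSymbol x) (X - C (1 + x)) = T 1 + x • T (-1) := by
  rw [map_sub, aeval_X, aeval_C, map_add, map_one, algebraMap_eq_T_mul_smul_T, narayanaSymbol]
  ring

lemma aeval_narayanaSymbol_shiftedDickson (x : R) {n : ℕ} (hn : n ≠ 0) :
    aeval (narayanaSymbol x) (shiftedDickson x n) = T 1 ^ n + (x • T (-1)) ^ n := by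
  obtain ⟨n, rfl⟩ := Nat.exists_eq_succ_of_ne_zero hn
  rw [shiftedDickson, aeval_comp, aeval_narayanaSymbol_X_sub_C,
    aeval_add_dickson (algebraMap_eq_T_mul_smul_T x)]

lemma aeval_narayanaSymbol_derivative_shiftedDickson_mul (x : R) (n : ℕ) :
    aeval (narayanaSymbol x) (derivative (shiftedDickson x n)) *
      (T 1 - x • T (-1) : R[T;T⁻¹]) =
        n * (T 1 ^ n - (x • T (-1)) ^ n : R[T;T⁻¹]) := by
  cases n with
  | zero => simp [shiftedDickson]
  | succ n =>
    rw [shiftedDickson, derivative_comp, derivative_X_sub_C, one_mul, aeval_comp,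
      aeval_narayanaSymbol_X_sub_C,
      aeval_add_derivative_dickson_mul_sub (algebraMap_eq_T_mul_smul_T x)]

lemma narayanaForm_one_shiftedDickson (x : R) {j : ℕ} (hj : j ≠ 0) :
    narayanaForm x 1 (shiftedDickson x j) = if 1 = j then x else 0 := by
  have integrand : T 1 * (x • T (-1) - T 1) *
      aeval (narayanaSymbol x) (wronskian 1 (shiftedDickson x j)) =
        j • (T 1 * (T 1 ^ 0 * (x • T (-1)) ^ j) - T 1 * (T 1 ^ j * (x • T (-1)) ^ 0)) := by
    rw [wronskian, one_mul, derivative_one, zero_mul, sub_zero, nsmul_eq_mul]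
    linear_combination -T 1 * aeval_narayanaSymbol_derivative_shiftedDickson_mul x j
  rw [narayanaForm_apply, integrand, map_nsmul, map_sub, constantTerm_T_mul_pow_mul_pow,
    constantTerm_T_mul_pow_mul_pow, if_neg (show ¬ (1 + j = ((0 : ℕ) : ℤ)) by lia), sub_zero]
  obtain rfl | h := eq_or_ne 1 j
  · simp
  · rw [if_neg h, if_neg (by lia), smul_zero]

lemma narayanaForm_shiftedDickson_of_pos (x : R) {i j : ℕ} (hi : 0 < i) (hij : i < j) :
    narayanaForm x (shiftedDickson x i) (shiftedDickson x j) =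
      if i + 1 = j then (2 * i + 1) * x ^ (i + 1) else 0 := by
  have integrand : T 1 * (x • T (-1) - T 1) *
      aeval (narayanaSymbol x) (wronskian (shiftedDickson x i) (shiftedDickson x j)) =
        (i + j) • (T 1 * (T 1 ^ i * (x • T (-1)) ^ j) - T 1 * (T 1 ^ j * (x • T (-1)) ^ i)) +
        (j - i : ℤ) • (T 1 * (T 1 ^ 0 * (x • T (-1)) ^ (i + j)) -
          T 1 * (T 1 ^ (i + j) * (x • T (-1)) ^ 0)) := by
    simp only [wronskian, map_sub, map_mul, aeval_narayanaSymbol_shiftedDickson x hi.ne',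
      aeval_narayanaSymbol_shiftedDickson x (hi.trans hij).ne', nsmul_eq_mul, zsmul_eq_mul]
    push_cast
    linear_combination
      T 1 * (T 1 ^ j + (x • T (-1)) ^ j) *
        aeval_narayanaSymbol_derivative_shiftedDickson_mul x i -
      T 1 * (T 1 ^ i + (x • T (-1)) ^ i) *
        aeval_narayanaSymbol_derivative_shiftedDickson_mul x j
  rw [narayanaForm_apply, integrand]
  simp only [map_add, map_nsmul, map_zsmul, map_sub, constantTerm_T_mul_pow_mul_pow]
  rw [if_neg (show ¬ (1 + j = (i : ℤ)) by lia),
    if_neg (show ¬ (1 + ((0 : ℕ) : ℤ) = (i + j : ℕ)) by lia),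
    if_neg (show ¬ (1 + (i + j : ℕ) = ((0 : ℕ) : ℤ)) by lia)]
  obtain rfl | h := eq_or_ne (i + 1) j
  · simp only [add_comm (1 : ℤ), Nat.cast_add, Nat.cast_one, if_true, sub_zero, nsmul_eq_mul,
      add_sub_cancel_left, sub_self, smul_zero, add_zero]
    ring
  · rw [if_neg h, if_neg (by lia)]
    simp

lemma narayanaForm_shiftedDickson (x : R) {i j : ℕ} (hij : i < j) :
    narayanaForm x (shiftedDickson x i) (shiftedDickson x j) =
      if i + 1 = j then (2 * i + 1) * x ^ (i + 1) else 0 := by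
  obtain rfl | hi := Nat.eq_zero_or_pos i
  · simpa [shiftedDickson] using narayanaForm_one_shiftedDickson x hij.ne'
  · exact narayanaForm_shiftedDickson_of_pos x hi hij

end Narayana

lemma prod_pow_two_mul_add_one {M : Type*} [CommMonoid M] (x : M) (n : ℕ) :
    ∏ k ∈ range n, x ^ (2 * k + 1) = x ^ n ^ 2 := by
  induction n with
  | zero => simp
  | succ n ih => rw [prod_range_succ, ih, ← pow_add]; congr 1; ring

theorem pfaffian_narayana_general {R : Type*} [CommRing R] (n : ℕ) (x : R) :
    pfaffian (N := n) (Matrix.of fun i j : Fin (2 * n) ↦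
        ((j.val : R) - (i.val : R)) * narayanaEval x (i.val + j.val)) =
      x ^ (n ^ 2) * ∏ k ∈ range n, (4 * (k : R) + 1) := by
  nontriviality R
  simp only [← narayanaForm_X_pow_X_pow]
  rw [pfaffian_gram_eq_of_isMonicOfDegree (isAlt_narayanaForm x)
      fun i ↦ isMonicOfDegree_shiftedDickson x i,
    pfaffian_eq_prod_of_superdiagonal fun i j hij hne ↦ by
      rw [Matrix.of_apply, narayanaForm_shiftedDickson x hij, if_neg hne]]
  have entry (k : Fin n) : narayanaForm x (shiftedDickson x (blockEquiv n (k, 0)))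
      (shiftedDickson x (blockEquiv n (k, 1))) = x ^ (2 * (k : ℕ) + 1) * (4 * (k : ℕ) + 1) := by
    rw [narayanaForm_shiftedDickson x (by simp [val_blockEquiv]),
      if_pos (by simp [val_blockEquiv, add_comm])]
    simp only [val_blockEquiv, Fin.coe_ofNat_eq_mod, Nat.zero_mod, zero_add, Nat.cast_mul,
      Nat.cast_ofNat]
    ring
  simp only [Matrix.of_apply, entry, prod_mul_distrib]
  rw [← prod_pow_two_mul_add_one, ← Fin.prod_univ_eq_prod_range, ← Fin.prod_univ_eq_prod_range]

/-- For every integer `n ≥ 0` and every complex number `x`, the Pfaffian of the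
`2n × 2n` skew-symmetric matrix with entries `(j-i)·N_{i+j-2}(x)` (1-based; here
0-based, so the entry at `(i,j)` is `(j-i)·N_{i+j}(x)`) equals
`x^{n²}·∏_{k=0}^{n-1} (4k+1)`. -/
theorem pfaffian_narayana (n : ℕ) (x : ℂ) :
    pfaffian (N := n) (Matrix.of fun i j : Fin (2 * n) =>
        ((j.val : ℂ) - (i.val : ℂ)) * narayana (i.val + j.val) x) =
      x ^ (n ^ 2) * ∏ k ∈ Finset.range n, (4 * (k : ℂ) + 1) := by
  simp only [narayana_eq_narayanaEval, pfaffian_narayana_general]
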